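/- Let k ≥ 2 be a natural number and let S ⊆ ℕ be a k-automatic set. Then the lower density of S, liminf_{N→∞} π_S(N)/N, is a rational number. -/

import Mathlib

open Filter

/-- A sequence `h : ℕ → Δ` is `k`-automatic if there is a DFAO (finite state set `Q`,
initial state `q₀`, transition function `δ`, output function `τ`) computing `h n` by
reading the base-`k` digits of `n` from the most significant digit to the least. -/
def IsAutomaticSeq {Δ : Type*} (k : ℕ) (h : ℕ → Δ) : Prop :=
  ∃ (Q : Type) (_ : Fintype Q) (q₀ : Q) (δ : Q → ℕ → Q) (τ : Q → Δ),
    ∀ n : ℕ, h n = τ (((Nat.digits k n).reverse).foldl δ q₀)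

/-- A set `S ⊆ ℕ` is `k`-automatic if its characteristic function is `k`-automatic. -/
def IsAutomaticSet (k : ℕ) (S : Set ℕ) : Prop :=
  IsAutomaticSeq k (S.indicator fun _ => (1 : ℕ))

/-- `piCount S N` is the number of elements of `S` that are less than `N`. -/
noncomputable def piCount (S : Set ℕ) (N : ℕ) : ℕ := (S ∩ Set.Iio N).ncard


/-- Averaging operator of the automaton. -/
noncomputable def avgOp {Q : Type} (F : Type) [Field F] (K : ℕ) (δ : Q → ℕ → Q) :
    (Q → F) →ₗ[F] (Q → F) where
  toFun f := fun q => (∑ d ∈ Finset.range K, f (δ q d)) / K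
  map_add' f g := by
    ext q; simp [Finset.sum_add_distrib, add_div]
  map_smul' c f := by
    ext q; simp [← Finset.mul_sum, mul_div_assoc]

theorem avgOp_apply {Q : Type} (F : Type) [Field F] (K : ℕ) (δ : Q → ℕ → Q) (f : Q → F) (q : Q) :
    avgOp F K δ f q = (∑ d ∈ Finset.range K, f (δ q d)) / K := rfl

theorem avgOp_le {Q : Type} {K : ℕ} (hK : 2 ≤ K) (δ : Q → ℕ → Q) (f : Q → ℝ) (D : ℝ)
    (hf : ∀ q, f q ≤ D) (q : Q) : avgOp ℝ K δ f q ≤ D := by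
  rw [avgOp_apply, div_le_iff₀ (by positivity)]
  calc _ ≤ ∑ d ∈ Finset.range K, D := Finset.sum_le_sum fun i _ => hf _
    _ = D * K := by simp [mul_comm]

theorem avgOp_gap {Q : Type} {K : ℕ} (hK : 2 ≤ K) (δ : Q → ℕ → Q)
    (hδ : ∀ q d e, d < K → e < K → ∃ d' < K, δ (δ q d) e = δ q d')
    (f : Q → ℝ) (D : ℝ) (hf : ∀ q, f q ≤ D) (q : Q) :
    D - avgOp ℝ K δ (avgOp ℝ K δ f) q ≤ K * (D - avgOp ℝ K δ f q) := by
  have hK0 : (0:ℝ) < K := by positivity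
  have h1 : K * (D - avgOp ℝ K δ f q) = ∑ d ∈ Finset.range K, (D - f (δ q d)) := by
    rw [avgOp_apply, Finset.sum_sub_distrib]; field_simp; simp
  rw [h1]
  have h2 : ∀ d < K, ∀ e < K, D - f (δ (δ q d) e) ≤ ∑ d ∈ Finset.range K, (D - f (δ q d)) := by
    intro d hd e he
    obtain ⟨d', hd', h⟩ := hδ q d e hd he
    rw [h]
    exact Finset.single_le_sum (f := fun d => D - f (δ q d)) (fun i _ => sub_nonneg.2 (hf _))
      (Finset.mem_range.2 hd')
  set X := ∑ d ∈ Finset.range K, (D - f (δ q d))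
  have h3 : ∀ d < K, D - X ≤ avgOp ℝ K δ f (δ q d) := by
    intro d hd
    rw [avgOp_apply, le_div_iff₀ hK0]
    calc (D - X) * K = ∑ e ∈ Finset.range K, (D - X) := by simp; ring
      _ ≤ _ := Finset.sum_le_sum fun e he => by
        have := h2 d hd e (Finset.mem_range.1 he); linarith
  have h4 : D - X ≤ avgOp ℝ K δ (avgOp ℝ K δ f) q := by
    rw [avgOp_apply, le_div_iff₀ hK0]
    calc (D - X) * K = ∑ e ∈ Finset.range K, (D - X) := by simp; ring
      _ ≤ _ := Finset.sum_le_sum fun e he => h3 e (Finset.mem_range.1 he)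
  linarith

theorem avgOp_upper {Q : Type} [Fintype Q] {K : ℕ} (hK : 2 ≤ K) (δ : Q → ℕ → Q)
    (hδ : ∀ q d e, d < K → e < K → ∃ d' < K, δ (δ q d) e = δ q d')
    (b : Q → ℝ) (ε : ℝ) (hε : 0 < ε) :
    ∀ᶠ n in atTop, ∀ q, ((avgOp ℝ K δ)^[n] (avgOp ℝ K δ b - b)) q < ε := by
  cases isEmpty_or_nonempty Q with
  | inl h => exact Eventually.of_forall fun n q => (h.false q).elim
  | inr h =>
  set T := avgOp ℝ K δ with hT
  set y : ℕ → Q → ℝ := fun n => T^[n] (T b - b) with hy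
  have ys : ∀ n, y (n+1) = T (y n) := fun n => Function.iterate_succ_apply' _ _ _
  choose m hm using fun n => Finite.exists_max (y n)
  set U : ℕ → ℝ := fun n => y n (m n) with hU
  have hyU : ∀ n q, y n q ≤ U n := hm
  have hanti : Antitone U := antitone_nat_of_succ_le fun n => by
    simp only [hU, ys]; exact avgOp_le hK δ _ _ (hyU n) _
  have hyU' : ∀ n j q, y (n+j) q ≤ U n := fun n j q => (hyU _ q).trans (hanti (by omega))
  by_contra hcon
  have hUε : ∀ n, ε ≤ U n := by
    intro n
    by_contra hlt
    apply hcon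
    filter_upwards [eventually_ge_atTop n] with N hN q
    exact (hyU N q).trans_lt ((hanti hN).trans_lt (not_le.1 hlt))
  -- bound of iterates
  obtain ⟨B, hB⟩ : ∃ B, ∀ q, |b q| ≤ B := by
    obtain ⟨q, hq⟩ := Finite.exists_max fun q => |b q|
    exact ⟨_, hq⟩
  have hTb : ∀ n q, T^[n] b q ≤ B := by
    intro n
    induction n with
    | zero => intro q; exact (le_abs_self _).trans (hB q)
    | succ n ih => intro q; rw [Function.iterate_succ_apply']; exact avgOp_le hK δ _ _ ih q
  have hTb' : ∀ n q, - T^[n] b q ≤ B := by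
    intro n
    induction n with
    | zero => intro q; exact (neg_le_abs _).trans (hB q)
    | succ n ih =>
      intro q; rw [Function.iterate_succ_apply']
      have := avgOp_le hK δ (-(T^[n] b)) B ih q
      rw [map_neg] at this; exact this
  have hyb : ∀ n, y n = T^[n+1] b - T^[n] b := by
    intro n
    induction n with
    | zero => simp [hy]
    | succ n ih =>
      rw [ys, ih, map_sub, ← Function.iterate_succ_apply' T, ← Function.iterate_succ_apply' T]
  have htel : ∀ J n q, ∑ j ∈ Finset.range J, y (n+j) q = T^[n+J] b q - T^[n] b q := by
    intro J n q
    induction J with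
    | zero => simp
    | succ J ih => rw [Finset.sum_range_succ, ih, hyb]; simp [add_assoc]
  have hgap : ∀ n q j, U n - y (n+1+j) q ≤ K^j * (U n - y (n+1) q) := by
    intro n q j
    induction j with
    | zero => simp
    | succ j ih =>
      have := avgOp_gap hK δ hδ (y (n+j)) (U n) (hyU' n j) q
      rw [← hT, ← ys, ← ys] at this
      have e1 : n + 1 + (j+1) = n + j + 1 + 1 := by ring
      have e2 : n + 1 + j = n + j + 1 := by ring
      rw [e2] at ih
      rw [e1, pow_succ]
      have := mul_le_mul_of_nonneg_left ih (Nat.cast_nonneg (α := ℝ) K)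
      nlinarith
  obtain ⟨J, hJ⟩ := exists_nat_gt ((2 * B + 1) / ε)
  rw [div_lt_iff₀ hε] at hJ
  have hJ0 : (0:ℝ) ≤ J := Nat.cast_nonneg _
  have hstep : ∀ n, 1 ≤ J * (K^J * (U n - U (n+1))) := by
    intro n
    have hn : 0 ≤ U n - U (n+1) := sub_nonneg.2 (hanti (Nat.le_succ n))
    have h1 : ∀ j ∈ Finset.range J, ε - K^J * (U n - U (n+1)) ≤ y (n+1+j) (m (n+1)) := by
      intro j hj
      have := hgap n (m (n+1)) j
      have h2 : (K:ℝ)^j ≤ K^J := pow_le_pow_right₀ (by exact_mod_cast (by omega : 1 ≤ K)) (Finset.mem_range.1 hj).le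
      have h3 := mul_le_mul_of_nonneg_right h2 hn
      have h4 := hUε n
      change U n - y (n+1+j) (m (n+1)) ≤ K^j * (U n - U (n+1)) at this
      linarith
    have h5 := Finset.sum_le_sum h1
    rw [htel] at h5
    simp only [Finset.sum_const, Finset.card_range, nsmul_eq_mul] at h5
    have := hTb (n+1+J) (m (n+1))
    have := hTb' (n+1) (m (n+1))
    nlinarith
  have hlim : Tendsto U atTop (nhds (⨅ n, U n)) :=
    tendsto_atTop_ciInf hanti ⟨ε, by rintro _ ⟨n, rfl⟩; exact hUε n⟩
  have h0 : Tendsto (fun n => J * (K^J * (U n - U (n+1)))) atTop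
      (nhds (J * (K^J * ((⨅ n, U n) - (⨅ n, U n))))) :=
    ((hlim.sub (hlim.comp (tendsto_add_atTop_nat 1))).const_mul _).const_mul _
  have := ge_of_tendsto' h0 hstep
  simp at this
  linarith

theorem avgOp_tendsto_zero {Q : Type} [Fintype Q] {K : ℕ} (hK : 2 ≤ K) (δ : Q → ℕ → Q)
    (hδ : ∀ q d e, d < K → e < K → ∃ d' < K, δ (δ q d) e = δ q d') (b : Q → ℝ) (q : Q) :
    Tendsto (fun n => ((avgOp ℝ K δ)^[n] (avgOp ℝ K δ b - b)) q) atTop (nhds 0) := by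
  rw [Metric.tendsto_nhds]
  intro ε hε
  filter_upwards [avgOp_upper hK δ hδ b ε hε, avgOp_upper hK δ hδ (-b) ε hε] with n h1 h2
  have h2 := h2 q
  have e : avgOp ℝ K δ (-b) - -b = - (avgOp ℝ K δ b - b) := by rw [map_neg]; abel
  rw [e, ← Module.End.coe_pow, map_neg, Pi.neg_apply, Module.End.coe_pow] at h2
  rw [Real.dist_eq, sub_zero, abs_lt]
  exact ⟨by linarith, h1 q⟩

theorem avgOp_cast {Q : Type} (K : ℕ) (δ : Q → ℕ → Q) (v : Q → ℚ) :
    avgOp ℝ K δ (fun q => (v q : ℝ)) = fun q => ((avgOp ℚ K δ v q : ℚ) : ℝ) := by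
  ext q; simp [avgOp_apply]

theorem avgOp_limit {Q : Type} [Fintype Q] {K : ℕ} (hK : 2 ≤ K) (δ : Q → ℕ → Q)
    (hδ : ∀ q d e, d < K → e < K → ∃ d' < K, δ (δ q d) e = δ q d') (v : Q → ℚ) :
    ∃ c : Q → ℚ, ∀ q, Tendsto (fun n => ((avgOp ℝ K δ)^[n] (fun q => (v q : ℝ))) q) atTop
      (nhds (c q : ℝ)) := by
  set f : (Q → ℚ) →ₗ[ℚ] (Q → ℚ) := avgOp ℚ K δ - LinearMap.id with hf
  have hfix : ∀ a : Q → ℚ, f a = 0 → ∀ n, (avgOp ℝ K δ)^[n] (fun q => (a q : ℝ)) = fun q => (a q : ℝ) := by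
    intro a ha n
    have : avgOp ℚ K δ a = a := by
      rw [hf] at ha; simpa [sub_eq_zero] using ha
    apply Function.iterate_fixed
    rw [avgOp_cast, this]
  have hcast : ∀ b : Q → ℚ, (fun q => ((f b q : ℚ) : ℝ)) =
      avgOp ℝ K δ (fun q => (b q : ℝ)) - fun q => (b q : ℝ) := by
    intro b; rw [avgOp_cast]; ext q; simp [hf]
  have hdis : Disjoint (LinearMap.ker f) (LinearMap.range f) := by
    rw [Submodule.disjoint_def]
    rintro a ha ⟨b, rfl⟩
    ext q
    have h := avgOp_tendsto_zero hK δ hδ (fun q => (b q : ℝ)) q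
    rw [← hcast] at h
    simp only [hfix _ (LinearMap.mem_ker.1 ha)] at h
    have := tendsto_nhds_unique h tendsto_const_nhds
    exact_mod_cast this.symm
  have htop : LinearMap.ker f ⊔ LinearMap.range f = ⊤ := by
    apply Submodule.eq_top_of_disjoint _ _ _ hdis
    rw [add_comm, LinearMap.finrank_range_add_finrank_ker]
  obtain ⟨a, ha, _, ⟨b, rfl⟩, hab⟩ := Submodule.mem_sup.1 (htop ▸ Submodule.mem_top (x := v))
  refine ⟨a, fun q => ?_⟩
  have h := avgOp_tendsto_zero hK δ hδ (fun q => (b q : ℝ)) q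
  have hv : (fun q => (v q : ℝ)) = (fun q => (a q : ℝ)) +
      (avgOp ℝ K δ (fun q => (b q : ℝ)) - fun q => (b q : ℝ)) := by
    rw [← hcast, ← hab]; ext q; simp
  have : ∀ n, (avgOp ℝ K δ)^[n] (fun q => (v q : ℝ)) q = a q +
      (avgOp ℝ K δ)^[n] (avgOp ℝ K δ (fun q => (b q : ℝ)) - fun q => (b q : ℝ)) q := by
    intro n
    rw [hv, ← Module.End.coe_pow, map_add, Pi.add_apply, Module.End.coe_pow, hfix a ha]
  simp only [this]
  simpa using h.const_add (a q : ℝ)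

/-- State reached from `q` after reading the `n` lowest base-`k` digits of `N`. -/
def runSt {Q : Type} (k : ℕ) (δ : Q → ℕ → Q) (q : Q) : ℕ → ℕ → Q
  | 0, _ => q
  | n + 1, N => δ (runSt k δ q n (N / k)) (N % k)

theorem runSt_add {Q : Type} {k : ℕ} (hk : 2 ≤ k) (δ : Q → ℕ → Q) (q : Q) (n m D E : ℕ)
    (hE : E < k ^ m) :
    runSt k δ (runSt k δ q n D) m E = runSt k δ q (n + m) (D * k ^ m + E) := by
  induction m generalizing E with
  | zero =>
    have : E = 0 := by simpa using hE
    simp [runSt, this]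
  | succ m ih =>
    have hk0 : 0 < k := by omega
    have e1 : (D * k ^ (m+1) + E) / k = D * k ^ m + E / k := by
      rw [pow_succ, ← mul_assoc, add_comm, Nat.add_mul_div_right _ _ hk0, add_comm]
    have e2 : (D * k ^ (m+1) + E) % k = E % k := by
      rw [pow_succ, ← mul_assoc, add_comm, Nat.add_mul_mod_self_right]
    rw [← add_assoc]
    simp only [runSt]
    rw [e1, e2, ih]
    rw [Nat.div_lt_iff_lt_mul hk0, ← pow_succ]; exact hE

theorem runSt_of_rec {Q : Type} {k : ℕ} (hk : 2 ≤ k) (δ : Q → ℕ → Q) (r : ℕ → Q)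
    (hr : ∀ N d, d < k → r (N * k + d) = δ (r N) d) (p N D : ℕ) (hD : D < k ^ p) :
    r (N * k ^ p + D) = runSt k δ (r N) p D := by
  induction p generalizing D with
  | zero =>
    have : D = 0 := by simpa using hD
    simp [runSt, this]
  | succ m ih =>
    have hk0 : 0 < k := by omega
    have e1 : N * k ^ (m+1) + D = (N * k ^ m + D / k) * k + D % k := by
      have := Nat.div_add_mod D k
      rw [pow_succ]; nlinarith
    simp only [runSt]
    rw [e1, hr _ _ (Nat.mod_lt _ hk0), ih]
    rw [Nat.div_lt_iff_lt_mul hk0, ← pow_succ]; exact hD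

theorem exists_idem_reach {Q : Type} [Fintype Q] {k : ℕ} (hk : 2 ≤ k) (δ : Q → ℕ → Q) :
    ∃ p, 1 ≤ p ∧ ∀ q D E, D < k ^ p → E < k ^ p →
      ∃ D' < k ^ p, runSt k δ (runSt k δ q p D) p E = runSt k δ q p D' := by
  have hk0 : 0 < k := by omega
  let R : ℕ → Set (Q × Q) := fun n => {x | ∃ D < k ^ n, runSt k δ x.1 n D = x.2}
  let Φ : Set (Q × Q) → Set (Q × Q) := fun A => {x | ∃ l, (x.1, l) ∈ A ∧ ∃ d < k, δ l d = x.2}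
  have hΦ : ∀ n, R (n+1) = Φ (R n) := by
    intro n
    ext ⟨i, j⟩
    constructor
    · rintro ⟨D, hD, h⟩
      refine ⟨runSt k δ i n (D / k), ⟨D / k, ?_, rfl⟩, D % k, Nat.mod_lt _ hk0, h⟩
      rw [Nat.div_lt_iff_lt_mul hk0, ← pow_succ]; exact hD
    · rintro ⟨l, ⟨D, hD, hl⟩, d, hd, h⟩
      change runSt k δ i n D = l at hl
      subst hl
      refine ⟨D * k + d, ?_, ?_⟩
      · rw [pow_succ]; nlinarith
      · simp only [runSt]
        rw [add_comm, Nat.add_mul_div_right _ _ hk0, Nat.div_eq_of_lt hd, zero_add,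
          Nat.add_mul_mod_self_right, Nat.mod_eq_of_lt hd]
        exact h
  obtain ⟨a, b, hab, h⟩ := Finite.exists_ne_map_eq_of_infinite R
  wlog hlt : a < b generalizing a b
  · exact this b a hab.symm h.symm (by omega)
  obtain ⟨t, ht⟩ := Nat.exists_eq_add_of_lt hlt
  have h1 : ∀ j, R (a + j) = R (a + j + (t + 1)) := by
    intro j
    induction j with
    | zero => rw [add_zero, h, ht]; rfl
    | succ j ih =>
      have e : a + (j + 1) + (t + 1) = a + j + (t + 1) + 1 := by ring
      rw [e, hΦ, ← ih, ← hΦ]; rfl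
  have h2 : ∀ s m, a ≤ m → R m = R (m + s * (t + 1)) := by
    intro s m hm
    induction s with
    | zero => simp
    | succ s ih =>
      obtain ⟨j, hj⟩ := Nat.exists_eq_add_of_le (show a ≤ m + s * (t+1) by omega)
      rw [ih, hj, h1, ← hj]
      congr 1; ring
  refine ⟨(a + 1) * (t + 1), Nat.mul_pos (by omega) (by omega), ?_⟩
  have h3 := h2 (a+1) ((a+1) * (t+1)) (by nlinarith)
  set p := (a + 1) * (t + 1)
  intro q D E hD hE
  rw [runSt_add hk _ _ _ _ _ _ hE]
  have : (q, runSt k δ q (p + p) (D * k ^ p + E)) ∈ R p := by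
    rw [h3]
    refine ⟨_, ?_, rfl⟩
    rw [pow_add]; nlinarith
  obtain ⟨D', hD', h'⟩ := this
  exact ⟨D', hD', h'.symm⟩

/-- Weighted count of words. -/
noncomputable def cnt {Q : Type} (K : ℕ) (δ : Q → ℕ → Q) (v : Q → ℝ) (q : Q) (n N : ℕ) : ℝ :=
  ∑ w ∈ Finset.range N, v (runSt K δ q n w)

theorem runSt_msd {Q : Type} {K : ℕ} (hK : 2 ≤ K) (δ : Q → ℕ → Q) (q : Q) (n d w : ℕ)
    (hd : d < K) (hw : w < K ^ n) :
    runSt K δ q (n + 1) (d * K ^ n + w) = runSt K δ (δ q d) n w := by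
  have := runSt_add hK δ q 1 n d w hw
  rw [add_comm n 1, ← this]
  simp [runSt, Nat.mod_eq_of_lt hd]

theorem cnt_block {Q : Type} {K : ℕ} (hK : 2 ≤ K) (δ : Q → ℕ → Q) (v : Q → ℝ) (q : Q) (n d : ℕ)
    (hd : d ≤ K) :
    cnt K δ v q (n + 1) (d * K ^ n) = ∑ e ∈ Finset.range d, cnt K δ v (δ q e) n (K ^ n) := by
  induction d with
  | zero => simp [cnt]
  | succ d ih =>
    rw [Finset.sum_range_succ, ← ih (by omega), add_mul, one_mul]
    unfold cnt
    rw [Finset.sum_range_add]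
    congr 1
    refine Finset.sum_congr rfl fun w hw => ?_
    rw [runSt_msd hK _ _ _ _ _ (by omega) (Finset.mem_range.1 hw)]

theorem cnt_succ {Q : Type} {K : ℕ} (hK : 2 ≤ K) (δ : Q → ℕ → Q) (v : Q → ℝ) (q : Q) (n d N : ℕ)
    (hd : d < K) (hN : N ≤ K ^ n) :
    cnt K δ v q (n + 1) (d * K ^ n + N) =
      ∑ e ∈ Finset.range d, cnt K δ v (δ q e) n (K ^ n) + cnt K δ v (δ q d) n N := by
  rw [← cnt_block hK _ _ _ _ _ hd.le]
  unfold cnt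
  rw [Finset.sum_range_add]
  congr 1
  refine Finset.sum_congr rfl fun w hw => ?_
  rw [runSt_msd hK _ _ _ _ _ hd ((Finset.mem_range.1 hw).trans_le hN)]

theorem cnt_full {Q : Type} {K : ℕ} (hK : 2 ≤ K) (δ : Q → ℕ → Q) (v : Q → ℝ) (q : Q) (n : ℕ) :
    cnt K δ v q n (K ^ n) = K ^ n * (avgOp ℝ K δ)^[n] v q := by
  induction n generalizing q with
  | zero => simp [cnt, runSt]
  | succ n ih =>
    have hK0 : (0:ℝ) < K := by positivity
    rw [pow_succ', cnt_block hK _ _ _ _ _ le_rfl, Function.iterate_succ_apply', avgOp_apply]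
    simp only [ih]
    rw [← Finset.mul_sum, pow_succ]
    field_simp

theorem bellman {Q : Type} [Fintype Q] {K : ℕ} (hK : 2 ≤ K) (δ : Q → ℕ → Q) (g : Q → ℕ → ℝ) :
    ∃ (W : Q → ℝ) (π : Q → ℕ), (∀ q, π q < K) ∧ (∀ q, K * W q = g q (π q) + W (δ q (π q))) ∧
      ∀ q d, d < K → K * W q ≤ g q d + W (δ q d) := by
  have hK0 : (0:ℝ) < K := by positivity
  have hne : (Finset.range K).Nonempty := ⟨0, Finset.mem_range.2 (by omega)⟩
  let Φ : (Q → ℝ) → (Q → ℝ) := fun W q =>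
    ((Finset.range K).inf' hne fun d => g q d + W (δ q d)) / K
  have hkey : ∀ W W' : Q → ℝ, ∀ q, Φ W q ≤ Φ W' q + dist W W' / K := by
    intro W W' q
    simp only [Φ]
    rw [← add_div]
    apply div_le_div_of_nonneg_right _ hK0.le
    obtain ⟨d, hd, he⟩ := Finset.exists_mem_eq_inf' hne fun d => g q d + W' (δ q d)
    rw [he]
    refine (Finset.inf'_le _ hd).trans ?_
    have := (le_abs_self _).trans ((Real.dist_eq _ _).symm.le.trans (dist_le_pi_dist W W' (δ q d)))
    linarith
  have hc : ContractingWith (1/2) Φ := by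
    refine ⟨by rw [← NNReal.coe_lt_coe]; norm_num, LipschitzWith.of_dist_le_mul fun W W' => ?_⟩
    have h2 : dist W W' / K ≤ ((1/2 : NNReal) : ℝ) * dist W W' := by
      rw [div_le_iff₀ hK0]
      have : (2:ℝ) ≤ K := by exact_mod_cast hK
      have := dist_nonneg (x := W) (y := W')
      push_cast
      nlinarith
    refine (dist_pi_le_iff (by positivity)).2 fun q => ?_
    rw [Real.dist_eq, abs_le]
    have h3 := hkey W W' q
    have h4 := hkey W' W q
    rw [dist_comm W' W] at h4
    constructor <;> linarith
  have hfix := hc.fixedPoint_isFixedPt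
  set W := hc.fixedPoint
  have hW : ∀ q, K * W q = (Finset.range K).inf' hne fun d => g q d + W (δ q d) := by
    intro q
    have : Φ W q = W q := congrFun hfix q
    rw [← this]
    simp only [Φ]
    field_simp
  choose π hπ hπ' using fun q => Finset.exists_mem_eq_inf' hne fun d => g q d + W (δ q d)
  refine ⟨W, π, fun q => Finset.mem_range.1 (hπ q), fun q => (hW q).trans (hπ' q), ?_⟩
  intro q d hd
  rw [hW]
  exact Finset.inf'_le _ (Finset.mem_range.2 hd)

theorem lin_unique {Q : Type} [Fintype Q] {F : Type} [Field F] [LinearOrder F]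
    [IsStrictOrderedRing F] {K : ℕ} (hK : 2 ≤ K) (s : Q → Q) (x : Q → F)
    (h : ∀ q, 0 ≤ K * x q - x (s q)) (q : Q) : 0 ≤ x q := by
  have : Nonempty Q := ⟨q⟩
  obtain ⟨m, hm⟩ := Finite.exists_min x
  refine le_trans ?_ (hm q)
  have h1 := h m
  have h2 := hm (s m)
  have h3 : (2:F) ≤ K := by exact_mod_cast hK
  by_contra hneg
  push Not at hneg
  nlinarith

theorem lin_solve {Q : Type} [Fintype Q] {K : ℕ} (hK : 2 ≤ K) (s : Q → Q) (g : Q → ℚ) :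
    ∃ x : Q → ℚ, ∀ q, K * x q - x (s q) = g q := by
  let f : (Q → ℚ) →ₗ[ℚ] (Q → ℚ) := (K : ℚ) • LinearMap.id - LinearMap.funLeft ℚ ℚ s
  have hf : ∀ x q, f x q = K * x q - x (s q) := fun x q => by
    simp [f, LinearMap.funLeft_apply]
  have hinj : Function.Injective f := by
    rw [injective_iff_map_eq_zero]
    intro x hx
    have h0 : ∀ q, K * x q - x (s q) = 0 := fun q => by rw [← hf, hx]; rfl
    ext q
    apply le_antisymm
    · have := lin_unique hK s (-x) (fun q => by have := h0 q; simp only [Pi.neg_apply]; linarith) q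
      simpa using this
    · exact lin_unique hK s x (fun q => (h0 q).ge) q
  obtain ⟨x, hx⟩ := LinearMap.injective_iff_surjective.1 hinj g
  exact ⟨x, fun q => by rw [← hf, hx]⟩

theorem err_tendsto (E e : ℕ → ℝ) (hE : ∀ n, 0 ≤ E n) (hrec : ∀ n, E (n+1) ≤ E n / 2 + e n)
    (he : Tendsto e atTop (nhds 0)) : Tendsto E atTop (nhds 0) := by
  rw [Metric.tendsto_atTop]
  intro ε hε
  obtain ⟨n₀, h₀⟩ := Metric.tendsto_atTop.1 he (ε/8) (by positivity)
  have h1 : ∀ j, E (n₀ + j) ≤ E n₀ * (1/2)^j + ε/4 := by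
    intro j
    induction j with
    | zero => simp; linarith
    | succ j ih =>
      have h2 := hrec (n₀ + j)
      have h3 := h₀ (n₀ + j) (by omega)
      rw [Real.dist_eq, sub_zero, abs_lt] at h3
      rw [← add_assoc, pow_succ]
      linarith
  have h2 : Tendsto (fun j : ℕ => E n₀ * (1/2:ℝ)^j) atTop (nhds 0) := by
    simpa using (tendsto_pow_atTop_nhds_zero_of_lt_one (r := (1/2:ℝ)) (by norm_num) (by norm_num)).const_mul (E n₀)
  obtain ⟨j₀, h3⟩ := Metric.tendsto_atTop.1 h2 (ε/4) (by positivity)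
  refine ⟨n₀ + j₀, fun n hn => ?_⟩
  obtain ⟨j, rfl⟩ := Nat.exists_eq_add_of_le (show n₀ ≤ n by omega)
  have h4 := h3 j (by omega)
  rw [Real.dist_eq, sub_zero, abs_lt] at h4
  rw [Real.dist_eq, sub_zero, abs_of_nonneg (hE _)]
  linarith [h1 j]

theorem step_est {Q : Type} [Fintype Q] {K : ℕ} (hK : 2 ≤ K) (δ : Q → ℕ → Q) (v c : Q → ℝ) (α : ℝ)
    (n : ℕ) (e : ℝ) (he : ∀ q, |(avgOp ℝ K δ)^[n] v q - c q| ≤ e) (q : Q) (d N : ℕ) (hd : d < K)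
    (hN : N ≤ K ^ n) :
    |(cnt K δ v q (n + 1) (d * K ^ n + N) - α * ((d * K ^ n + N : ℕ) : ℝ))
      - K ^ n * (∑ i ∈ Finset.range d, (c (δ q i) - α))
      - (cnt K δ v (δ q d) n N - α * N)| ≤ K ^ n * (K * e) := by
  have he0 : 0 ≤ e := (abs_nonneg _).trans (he q)
  rw [cnt_succ hK δ v q n d N hd hN]
  simp only [cnt_full hK]
  have h1 : (∑ i ∈ Finset.range d, (K:ℝ) ^ n * (avgOp ℝ K δ)^[n] v (δ q i)
      + cnt K δ v (δ q d) n N - α * ((d * K ^ n + N : ℕ) : ℝ))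
      - K ^ n * (∑ i ∈ Finset.range d, (c (δ q i) - α))
      - (cnt K δ v (δ q d) n N - α * N) =
      K ^ n * ∑ i ∈ Finset.range d, ((avgOp ℝ K δ)^[n] v (δ q i) - c (δ q i)) := by
    rw [Finset.sum_sub_distrib, Finset.sum_sub_distrib, ← Finset.mul_sum]
    push_cast
    simp
    ring
  rw [h1, abs_mul, abs_of_nonneg (by positivity)]
  apply mul_le_mul_of_nonneg_left _ (by positivity)
  calc _ ≤ ∑ i ∈ Finset.range d, |(avgOp ℝ K δ)^[n] v (δ q i) - c (δ q i)| :=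
        Finset.abs_sum_le_sum_abs _ _
    _ ≤ ∑ i ∈ Finset.range d, e := Finset.sum_le_sum fun i _ => he _
    _ = d * e := by simp
    _ ≤ K * e := by
      apply mul_le_mul_of_nonneg_right _ he0
      exact_mod_cast hd.le

theorem core {Q : Type} [Fintype Q] {K : ℕ} (hK : 2 ≤ K) (δ : Q → ℕ → Q)
    (hδ : ∀ q d e, d < K → e < K → ∃ d' < K, δ (δ q d) e = δ q d') (v : Q → ℚ) (r : ℕ → Q)
    (hr : ∀ N d, d < K → r (N * K + d) = δ (r N) d) (u : ℕ → ℝ)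
    (hu : ∀ N, u N = (∑ w ∈ Finset.range N, (v (r w) : ℝ)) / N)
    (hu0 : ∀ N, 0 ≤ u N) (hu1 : ∀ N, u N ≤ 1) :
    ∃ q : ℚ, atTop.liminf u = (q : ℝ) := by
  have hK0 : (0:ℝ) < K := by positivity
  have hK2 : (2:ℝ) ≤ K := by exact_mod_cast hK
  obtain ⟨c, hc⟩ := avgOp_limit hK δ hδ v
  set α := atTop.liminf u with hα
  set vr : Q → ℝ := fun q => (v q : ℝ) with hvr
  obtain ⟨W, π, hπ, hWπ, hW⟩ := bellman hK δ
    (fun q d => ∑ i ∈ Finset.range d, ((c (δ q i) : ℝ) - α))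
  -- errors
  set e : ℕ → ℝ := fun n => ∑ q, |(avgOp ℝ K δ)^[n] vr q - c q| with he
  have he0 : ∀ n, 0 ≤ e n := fun n => Finset.sum_nonneg fun _ _ => abs_nonneg _
  have heq : ∀ n q, |(avgOp ℝ K δ)^[n] vr q - c q| ≤ e n := fun n q =>
    Finset.single_le_sum (f := fun q => |(avgOp ℝ K δ)^[n] vr q - c q|)
      (fun _ _ => abs_nonneg _) (Finset.mem_univ q)
  have helim : Tendsto e atTop (nhds 0) := by
    have : Tendsto e atTop (nhds (∑ q : Q, |(c q : ℝ) - c q|)) :=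
      tendsto_finsetSum _ fun q _ => ((hc q).sub_const _).abs
    simpa using this
  have hstep := fun n q d N hd hN =>
    abs_le.1 (step_est hK δ vr (fun q => (c q : ℝ)) α n (e n) (heq n) q d N hd hN)
  set E : ℕ → ℝ := fun n => Nat.rec (∑ q, |W q|) (fun n x => x / 2 + e n) n with hEdef
  have hEs : ∀ n, E (n+1) = E n / 2 + e n := fun n => rfl
  have hE0 : ∀ n, 0 ≤ E n := by
    intro n
    induction n with
    | zero => exact Finset.sum_nonneg fun _ _ => abs_nonneg _
    | succ n ih => rw [hEs]; linarith [he0 n]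
  have hElim : Tendsto E atTop (nhds 0) := err_tendsto E e hE0 (fun n => (hEs n).le) helim
  have hEz : ∀ q, |W q| ≤ E 0 := fun q =>
    Finset.single_le_sum (f := fun q => |W q|) (fun _ _ => abs_nonneg _) (Finset.mem_univ q)
  have hmul : ∀ n, (K:ℝ)^n * (K * e n + E n) ≤ K^(n+1) * E (n+1) := by
    intro n
    rw [hEs, pow_succ, mul_assoc]
    apply mul_le_mul_of_nonneg_left _ (by positivity)
    nlinarith [hE0 n]
  -- lower estimate
  have hlow : ∀ n q N, N < K ^ n → K ^ n * (W q - E n) ≤ cnt K δ vr q n N - α * N := by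
    intro n
    induction n with
    | zero =>
      intro q N hN
      have : N = 0 := by simpa using hN
      subst this
      have := (le_abs_self _).trans (hEz q)
      simp [cnt]; linarith
    | succ n ih =>
      intro q N hN
      have hp : 0 < K ^ n := by positivity
      have hd : N / K ^ n < K := by
        rw [Nat.div_lt_iff_lt_mul hp, ← pow_succ']; exact hN
      have hN' : N % K ^ n < K ^ n := Nat.mod_lt _ hp
      have h1 := (hstep n q _ _ hd hN'.le).1
      have e1 : N / K ^ n * K ^ n + N % K ^ n = N := Nat.div_add_mod' _ _
      rw [e1] at h1
      have h2 := ih (δ q (N / K ^ n)) _ hN'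
      have h3 := hmul n
      have h4 := mul_le_mul_of_nonneg_left (hW q _ hd) (show (0:ℝ) ≤ K^n by positivity)
      have e2 : (K:ℝ)^(n+1) * (W q - E (n+1)) = K^n * (K * W q) - K^(n+1) * E (n+1) := by ring
      rw [e2]
      simp only [mul_add, mul_sub] at h1 h2 h3 h4 ⊢
      linarith
  have hupp : ∀ n q, ∃ N < K ^ n, cnt K δ vr q n N - α * N ≤ K ^ n * (W q + E n) := by
    intro n
    induction n with
    | zero =>
      intro q
      refine ⟨0, by simp, ?_⟩
      have := (neg_abs_le (W q))
      have := hEz q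
      simp [cnt]; linarith
    | succ n ih =>
      intro q
      obtain ⟨N, hN, h⟩ := ih (δ q (π q))
      refine ⟨π q * K ^ n + N, ?_, ?_⟩
      · have := hπ q
        calc π q * K ^ n + N < π q * K ^ n + K ^ n := by omega
          _ = (π q + 1) * K ^ n := by ring
          _ ≤ K * K ^ n := Nat.mul_le_mul_right _ this
          _ = _ := by ring
      · have h1 := (hstep n q _ _ (hπ q) hN.le).2
        have h3 := hmul n
        have h4 := congrArg (fun x => (K:ℝ)^n * x) (hWπ q)
        have e2 : (K:ℝ)^(n+1) * (W q + E (n+1)) = K^n * (K * W q) + K^(n+1) * E (n+1) := by ring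
        rw [e2]
        simp only [mul_add] at h1 h h3 h4 ⊢
        linarith
  -- counting function
  have hcnt : ∀ n N, N ≤ K ^ n → u N * N = cnt K δ vr (r 0) n N := by
    intro n N hN
    have : cnt K δ vr (r 0) n N = ∑ w ∈ Finset.range N, (v (r w) : ℝ) := by
      refine Finset.sum_congr rfl fun w hw => ?_
      have := runSt_of_rec hK δ r hr n 0 w ((Finset.mem_range.1 hw).trans_le hN)
      rw [zero_mul, zero_add] at this
      rw [this]
    rw [this, hu]
    rcases Nat.eq_zero_or_pos N with rfl | h0
    · simp
    · field_simp
  -- the first digit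
  set H : ℕ → ℝ := fun d => ∑ i ∈ Finset.range d, ((c (δ (r 0) i) : ℝ) - α) + W (δ (r 0) d) with hH
  obtain ⟨d₀, hd₀, hmin⟩ := Finset.exists_min_image (Finset.Ico 1 K) H ⟨1, by simp; omega⟩
  rw [Finset.mem_Ico] at hd₀
  have hbdd1 : IsBoundedUnder (· ≥ ·) atTop u := isBoundedUnder_of ⟨0, hu0⟩
  have hbdd2 : IsCoboundedUnder (· ≥ ·) atTop u :=
    (isBoundedUnder_of ⟨1, hu1⟩ : IsBoundedUnder (· ≤ ·) atTop u).isCoboundedUnder_ge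
  have hsmall : ∀ η > 0, ∀ᶠ n in atTop, K * e n + E n < η := by
    intro η hη
    have : Tendsto (fun n => K * e n + E n) atTop (nhds (K * 0 + 0)) := (helim.const_mul _).add hElim
    rw [mul_zero, add_zero] at this
    exact this.eventually_lt_const hη
  have hV0 : 0 ≤ H d₀ := by
    by_contra hneg
    push Not at hneg
    have hα' : α - (-H d₀) / (2 * K) < α := by
      have : 0 < (-H d₀) / (2 * K) := div_pos (by linarith) (by linarith)
      linarith
    have hev := eventually_lt_of_lt_liminf (f := atTop) (u := u) (hα ▸ hα') hbdd1
    obtain ⟨N₀, hN₀⟩ := eventually_atTop.1 hev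
    obtain ⟨n, hn, hnN⟩ := ((hsmall (-H d₀ / 2) (by linarith)).and (eventually_ge_atTop N₀)).exists
    obtain ⟨N, hN, h⟩ := hupp n (δ (r 0) d₀)
    have h1 := (hstep n (r 0) d₀ N hd₀.2 hN.le).2
    have hlt : d₀ * K ^ n + N ≤ K ^ (n+1) := by
      calc d₀ * K ^ n + N ≤ (d₀ + 1) * K ^ n := by rw [add_mul]; omega
          _ ≤ K * K ^ n := Nat.mul_le_mul_right _ hd₀.2
          _ = _ := by ring
    have hge : N₀ ≤ d₀ * K ^ n + N := by
      have := Nat.lt_pow_self (n := n) (show 1 < K by omega)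
      nlinarith [hd₀.1]
    rw [← hcnt (n+1) _ hlt] at h1
    have h2 := hN₀ _ hge
    set X := d₀ * K ^ n + N
    have hX : (X:ℝ) ≤ K ^ (n+1) := by exact_mod_cast hlt
    have h3 : -((-H d₀) / (2 * K)) * K^(n+1) ≤ u X * X - α * X := by
      have h5 : 0 < (-H d₀) / (2 * K) := div_pos (by linarith) (by linarith)
      have := mul_le_mul_of_nonneg_right h2.le (Nat.cast_nonneg (α := ℝ) X)
      nlinarith
    have e3 : -((-H d₀) / (2 * K)) * K^(n+1) = K^n * (H d₀ / 2) := by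
      rw [pow_succ]; field_simp
    rw [e3] at h3
    have h6 : (K:ℝ)^n * (H d₀ / 2) ≤ K^n * (H d₀ + (K * e n + E n)) := by
      simp only [hH, mul_add] at h1 h h3 ⊢
      linarith
    have := le_of_mul_le_mul_left h6 (by positivity)
    linarith
  have hV1 : H d₀ ≤ 0 := by
    by_contra hpos
    push Not at hpos
    have hα' : α < α + H d₀ / (2 * K) := by
      have : 0 < H d₀ / (2 * K) := div_pos (by linarith) (by linarith)
      linarith
    have hfr := frequently_lt_of_liminf_lt (f := atTop) (u := u) hbdd2 (hα ▸ hα')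
    obtain ⟨n₁, hn₁⟩ := eventually_atTop.1 (hsmall (H d₀ / 2) (by linarith))
    obtain ⟨X, hXu, hXge⟩ := (hfr.and_eventually (eventually_ge_atTop (K ^ n₁))).exists
    have hX0 : X ≠ 0 := by
      have : 0 < K ^ n₁ := by positivity
      omega
    set n := Nat.log K X with hn
    have hnle : K ^ n ≤ X := Nat.pow_log_le_self K hX0
    have hlt : X < K ^ (n+1) := Nat.lt_pow_succ_log_self (by omega) X
    have hnn : n₁ ≤ n := (Nat.le_log_iff_pow_le (by omega) hX0).2 hXge
    have hp : 0 < K ^ n := by positivity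
    have hd : X / K ^ n < K := by
      rw [Nat.div_lt_iff_lt_mul hp, ← pow_succ']; exact hlt
    have hd1 : 1 ≤ X / K ^ n := (Nat.one_le_div_iff hp).2 hnle
    have hN' : X % K ^ n < K ^ n := Nat.mod_lt _ hp
    have h1 := (hstep n (r 0) _ _ hd hN'.le).1
    have e1 : X / K ^ n * K ^ n + X % K ^ n = X := Nat.div_add_mod' _ _
    rw [e1, ← hcnt (n+1) _ hlt.le] at h1
    have h2 := hlow n (δ (r 0) (X / K ^ n)) _ hN'
    have h3 := hmin (X / K ^ n) (Finset.mem_Ico.2 ⟨hd1, hd⟩)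
    have h4 := hn₁ n hnn
    have hXr : (X:ℝ) ≤ K ^ (n+1) := by exact_mod_cast hlt.le
    have h5 : (K:ℝ)^n * (H (X / K ^ n) - (K * e n + E n)) ≤ u X * X - α * X := by
      simp only [hH, mul_add, mul_sub] at h1 h2 ⊢
      linarith
    have h6 : (K:ℝ)^n * (H d₀ / 2) < K^n * (H (X / K ^ n) - (K * e n + E n)) :=
      mul_lt_mul_of_pos_left (by linarith) (by positivity)
    have e3 : (H d₀) / (2 * K) * K^(n+1) = K^n * (H d₀ / 2) := by
      rw [pow_succ]; field_simp
    have h7 : u X * X ≤ (α + H d₀ / (2 * K)) * X :=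
      mul_le_mul_of_nonneg_right hXu.le (Nat.cast_nonneg _)
    have h8 : H d₀ / (2 * K) * X ≤ H d₀ / (2 * K) * K^(n+1) :=
      mul_le_mul_of_nonneg_left hXr (div_pos (by linarith) (by linarith)).le
    linarith
  have hV : H d₀ = 0 := le_antisymm hV1 hV0
  -- rational solution
  obtain ⟨R, hR⟩ := lin_solve hK (fun q => δ q (π q)) (fun q => ∑ i ∈ Finset.range (π q), c (δ q i))
  obtain ⟨x, hx⟩ := lin_solve hK (fun q => δ q (π q)) (fun q => (π q : ℚ))
  have hx0 : ∀ q, 0 ≤ x q := lin_unique hK (fun q => δ q (π q)) x fun q => by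
    rw [hx]; positivity
  have hWR : ∀ q, W q = R q - α * x q := by
    have hz : ∀ q, (K:ℝ) * (W q - (R q - α * x q)) -
        (W (δ q (π q)) - (R (δ q (π q)) - α * x (δ q (π q)))) = 0 := by
      intro q
      have h1 := hWπ q
      have h2 : (K:ℝ) * R q - R (δ q (π q)) = ∑ i ∈ Finset.range (π q), (c (δ q i) : ℝ) := by
        exact_mod_cast hR q
      have h3 : (K:ℝ) * x q - x (δ q (π q)) = π q := by exact_mod_cast hx q
      simp only [Finset.sum_sub_distrib, Finset.sum_const, Finset.card_range, nsmul_eq_mul] at h1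
      linear_combination h1 - h2 + α * h3
    intro q
    apply le_antisymm
    · have := lin_unique hK (fun q => δ q (π q)) (fun q => -(W q - (R q - α * x q)))
        (fun q => by have := hz q; linarith) q
      linarith
    · have := lin_unique hK (fun q => δ q (π q)) (fun q => (W q - (R q - α * x q)))
        (fun q => (hz q).ge) q
      linarith
  refine ⟨(∑ i ∈ Finset.range d₀, c (δ (r 0) i) + R (δ (r 0) d₀)) / (d₀ + x (δ (r 0) d₀)), ?_⟩
  have hpos : (0:ℝ) < d₀ + x (δ (r 0) d₀) := by
    have h1 : (1:ℝ) ≤ d₀ := by exact_mod_cast hd₀.1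
    have h2 : (0:ℝ) ≤ x (δ (r 0) d₀) := by exact_mod_cast hx0 _
    linarith
  push_cast
  rw [eq_div_iff hpos.ne']
  simp only [hH, hWR, Finset.sum_sub_distrib, Finset.sum_const, Finset.card_range,
    nsmul_eq_mul] at hV
  linarith

theorem automaton_normalize {k : ℕ} (hk : 2 ≤ k) {Q : Type} (q₀ : Q)
    (δ : Q → ℕ → Q) :
    ∃ (δ' : Option Q → ℕ → Option Q) (r : ℕ → Option Q),
      (∀ N d, d < k → r (N * k + d) = δ' (r N) d) ∧
      ∀ N, (r N).getD q₀ = ((Nat.digits k N).reverse).foldl δ q₀ := by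
  refine ⟨fun o d => match o with
    | none => if d = 0 then none else some (δ q₀ d)
    | some q => some (δ q d),
    fun N => if N = 0 then none else some (((Nat.digits k N).reverse).foldl δ q₀), ?_, ?_⟩
  · intro N d hd
    have hk0 : 0 < k := by omega
    rcases Nat.eq_zero_or_pos (N * k + d) with h | h
    · have hd0 : d = 0 := by omega
      have hN0 : N = 0 := by
        rcases Nat.eq_zero_or_pos N with h' | h'
        · exact h'
        · have := Nat.mul_pos h' hk0; omega
      subst hd0; subst hN0; simp
    · have hdig : Nat.digits k (N * k + d) = d :: Nat.digits k N := by
        rw [Nat.digits_def' (by omega) h, add_comm, Nat.add_mul_mod_self_right,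
          Nat.mod_eq_of_lt hd, Nat.add_mul_div_right _ _ hk0, Nat.div_eq_of_lt hd, zero_add]
      beta_reduce
      rw [if_neg h.ne', hdig]
      by_cases hN : N = 0
      · subst hN
        have : d ≠ 0 := by omega
        simp [this]
      · simp [hN, List.foldl_append]
  · intro N
    by_cases hN : N = 0
    · simp [hN]
    · simp [hN]

theorem piCount_eq_sum (S : Set ℕ) (N : ℕ) :
    piCount S N = ∑ w ∈ Finset.range N, S.indicator (fun _ => (1:ℕ)) w := by
  classical
  have : S ∩ Set.Iio N = ((Finset.range N).filter (· ∈ S) : Finset ℕ) := by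
    ext x; simp [and_comm]
  rw [piCount, this, Set.ncard_coe_finset, Finset.card_filter]
  refine Finset.sum_congr rfl fun w _ => ?_
  simp [Set.indicator_apply]

theorem lower_density_automatic_set_rational
    (k : ℕ) (hk : 2 ≤ k) (S : Set ℕ) (hS : IsAutomaticSet k S) :
    ∃ q : ℚ, Filter.atTop.liminf (fun N : ℕ => (piCount S N : ℝ) / N) = (q : ℝ) := by
  obtain ⟨Q, _, q₀, δ, τ, hτ⟩ := hS
  obtain ⟨δ', r, hr, hrv⟩ := automaton_normalize hk q₀ δ
  obtain ⟨p, hp, hidem⟩ := exists_idem_reach hk δ'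
  have hK : 2 ≤ k ^ p := hk.trans (Nat.le_self_pow (by omega) k)
  refine core hK (fun q D => runSt k δ' q p D) (fun q d e hd he => hidem q d e hd he)
    (fun o => (τ (o.getD q₀) : ℚ)) r (fun N d hd => runSt_of_rec hk δ' r hr p N d hd) _ ?_ ?_ ?_
  · intro N
    rw [piCount_eq_sum]
    push_cast
    congr 1
    refine Finset.sum_congr rfl fun w _ => ?_
    rw [hrv, hτ]
  · intro N; positivity
  · intro N
    apply div_le_one_of_le₀ _ (Nat.cast_nonneg _)
    have : piCount S N ≤ (Set.Iio N).ncard := Set.ncard_le_ncard Set.inter_subset_right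
    rw [Set.ncard_eq_toFinset_card'] at this
    simpa using this
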